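/- Let A be a commutative ring and n a positive integer. Define W_A^n to be the set A^n with the operation (a₁,…,aₙ) + (b₁,…,bₙ) = (c₁,…,cₙ), where cᵢ = aᵢ + bᵢ + Σ_{h+k=i, h,k≥1} aₕ·bₖ. Then W_A^n is a commutative group. -/

import Mathlib

/-- The Witt-type addition on `A^n`: the `i`-th coordinate (coordinates indexed `1,…,n`,
here by `Fin n` via `i ↦ i+1`) of the sum of `a` and `b` is
`aᵢ + bᵢ + Σ_{h+k=i, h,k ≥ 1} aₕ·bₖ`. -/
def wittOp {A : Type*} [CommRing A] {n : ℕ} (a b : Fin n → A) : Fin n → A :=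
  fun i => a i + b i +
    ∑ p ∈ Finset.univ.filter
      (fun p : Fin n × Fin n => (p.1.val + 1) + (p.2.val + 1) = i.val + 1),
      a p.1 * b p.2

open PowerSeries in
/-- The coefficients of `X, X^2, …, X^n` in a power series, as an `n`-tuple. -/
noncomputable def coeffTuple {A : Type*} [CommRing A] (n : ℕ) (f : A⟦X⟧) : Fin n → A :=
  fun i => coeff (i.val + 1) f

open PowerSeries in
theorem coeffTuple_one {A : Type*} [CommRing A] (n : ℕ) :
    coeffTuple n (1 : A⟦X⟧) = 0 := by
  ext i
  simp [coeffTuple, coeff_one]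

open PowerSeries in
/-- Every tuple comes from a power series with constant coefficient `1`. -/
theorem exists_coeffTuple_eq {A : Type*} [CommRing A] {n : ℕ} (a : Fin n → A) :
    ∃ f : A⟦X⟧, constantCoeff f = 1 ∧ coeffTuple n f = a := by
  refine ⟨1 + ∑ i : Fin n, monomial (i.val + 1) (a i), ?_, ?_⟩
  · have h (k : ℕ) (r : A) : constantCoeff (monomial (k + 1) r) = 0 := by
      rw [← coeff_zero_eq_constantCoeff_apply, coeff_monomial, if_neg k.succ_ne_zero.symm]
    simp [h]
  · ext i
    simp [coeffTuple, coeff_one, coeff_monomial, Fin.val_inj]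

open PowerSeries in
/-- On power series with constant coefficient `1`, multiplication induces `wittOp`. -/
theorem coeffTuple_mul {A : Type*} [CommRing A] (n : ℕ) {f g : A⟦X⟧}
    (hf : constantCoeff f = 1) (hg : constantCoeff g = 1) :
    coeffTuple n (f * g) = wittOp (coeffTuple n f) (coeffTuple n g) := by
  ext ⟨i, hi⟩
  simp only [coeffTuple, wittOp, coeff_mul]
  rw [Finset.Nat.sum_antidiagonal_succ]
  cases i with
  | zero =>
    rw [Finset.filter_false_of_mem (by intros; omega)]
    simp [hf, hg, add_comm]
  | succ j =>
    rw [Finset.Nat.sum_antidiagonal_succ']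
    have key : ∑ p ∈ Finset.HasAntidiagonal.antidiagonal j, coeff (p.1 + 1) f * coeff (p.2 + 1) g =
        ∑ p ∈ Finset.univ.filter
          (fun p : Fin n × Fin n => (p.1.val + 1) + (p.2.val + 1) = j + 1 + 1),
          coeff (p.1.val + 1) f * coeff (p.2.val + 1) g := by
      symm
      refine Finset.sum_nbij (fun p => (p.1.val, p.2.val)) ?_ ?_ ?_ fun _ _ => rfl
      · intro p hp
        simp only [Finset.mem_filter, Finset.mem_univ, true_and] at hp
        simp only [Finset.HasAntidiagonal.mem_antidiagonal]
        omega
      · rintro ⟨p, q⟩ - ⟨r, s⟩ - h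
        simpa [Fin.val_inj] using h
      · rintro ⟨p, q⟩ h
        simp only [Finset.mem_coe, Finset.HasAntidiagonal.mem_antidiagonal] at h
        refine ⟨(⟨p, by omega⟩, ⟨q, by omega⟩), ?_, rfl⟩
        simp only [Finset.coe_filter, Finset.mem_univ, true_and, Set.mem_ofPred_eq]
        omega
    rw [key]
    simp only [coeff_zero_eq_constantCoeff_apply, hf, hg]
    ring

/-- `W_A^n`, i.e. `A^n` with the operation `cᵢ = aᵢ + bᵢ + Σ_{h+k=i, h,k≥1} aₕbₖ`,
is a commutative group with identity `0`. -/
theorem wittGroup (A : Type*) [CommRing A] (n : ℕ) (hn : 0 < n) :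
    (∀ a b c : Fin n → A, wittOp (wittOp a b) c = wittOp a (wittOp b c)) ∧
    (∀ a b : Fin n → A, wittOp a b = wittOp b a) ∧
    (∀ a : Fin n → A, wittOp a 0 = a) ∧
    (∀ a : Fin n → A, wittOp 0 a = a) ∧
    (∀ a : Fin n → A, ∃ b : Fin n → A, wittOp a b = 0) := by
  have comm (a b : Fin n → A) : wittOp a b = wittOp b a := by
    obtain ⟨f, hf, rfl⟩ := exists_coeffTuple_eq a
    obtain ⟨g, hg, rfl⟩ := exists_coeffTuple_eq b
    rw [← coeffTuple_mul n hf hg, ← coeffTuple_mul n hg hf, mul_comm]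
  have add_zero (a : Fin n → A) : wittOp a 0 = a := by
    ext i
    simp [wittOp]
  refine ⟨fun a b c => ?_, comm, add_zero, fun a => (comm 0 a).trans (add_zero a), fun a => ?_⟩
  · obtain ⟨f, hf, rfl⟩ := exists_coeffTuple_eq a
    obtain ⟨g, hg, rfl⟩ := exists_coeffTuple_eq b
    obtain ⟨h, hh, rfl⟩ := exists_coeffTuple_eq c
    rw [← coeffTuple_mul n hf hg, ← coeffTuple_mul n hg hh,
      ← coeffTuple_mul n (by simp [hf, hg]) hh, ← coeffTuple_mul n hf (by simp [hg, hh]),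
      mul_assoc]
  · obtain ⟨f, hf, rfl⟩ := exists_coeffTuple_eq a
    refine ⟨coeffTuple n (PowerSeries.invOfUnit f 1), ?_⟩
    rw [← coeffTuple_mul n hf (by simp), PowerSeries.mul_invOfUnit f 1 (by simpa using hf),
      coeffTuple_one]
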